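/- arXiv:2604.13212 — 4 statements merged into one kernel-verified Lean document; each statement's English description precedes it below -/
import Mathlib

section
/- Let G be a (possibly empty) graph. Suppose S and S' are shields of G satisfying S(v) ≤ S'(v) for each v ∈ V(G), and suppose T and T' are targets of G satisfying T(v) ≥ T'(v) for each v ∈ V(G). Then, for each j ∈ {3,4}, if G is ST^(j)-(S,T)-degenerate, then G is ST^(j)-(S',T')-degenerate. -/
/-!
Monotonicity is proved by simulation. Let a legal sequence run on a state `st`, and let `st'` be a
state dominating it: fewer active vertices and, on those, a larger shield and a smaller target.
An operation `(u, W)` on `st` is answered as follows.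

* If `u` is no longer active in `st'`, or its target there is strictly smaller, nothing is done:
  the slack in the target pays for the operation.
* Otherwise the targets of `u` agree, and `(u, W')` is performed, where `W'` consists of those
  `w ∈ W` active in `st'` at which the two shields agree. On `W'` the sum `S + T` has not grown,
  and at `u` it has not shrunk, so the operation is legal; on `W \ W'` the larger shield is
  strictly larger and can afford to lose `1`.

Domination is preserved, and `W' ⊆ W`, so restrictedness is preserved too. When `st` has no
active vertex left, neither has `st'`.
-/

open scoped Classical

noncomputable section

namespace StrictDeg

/-- The state of the `ShadeSave` process: the active vertex set (the vertex set of the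
current induced subgraph), the current shield, and the current target. -/
structure State (V : Type) where
  A : Finset V
  S : V → ℕ
  T : V → ℕ

variable {V : Type}

/-- The output of the operation `ShadeSave(G[A], S, T, u, W)`. -/
def applyStep (G : SimpleGraph V) (st : State V) (u : V) (W : Finset V) : State V where
  A := if st.T u = 1 then st.A.erase u else st.A
  S := fun v => if G.Adj u v ∧ v ∈ st.A ∧ v ∉ W then st.S v - 1 else st.S v
  T := fun v => if v = u ∧ 1 < st.T u then st.T u - 1 else st.T v

/-- Legality of the operation `ShadeSave(G[A], S, T, u, W)`:  `u` is a vertex of the current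
graph, `W` is a set of neighbors of `u` in the current graph,
`S u + T u > ∑_{w ∈ W} (S w + T w)`, and the output shield is nonnegative (in `ℕ` terms:
every neighbor of `u` in the current graph that is not saved has shield value at least 1). -/
def LegalStep (G : SimpleGraph V) (st : State V) (u : V) (W : Finset V) : Prop :=
  u ∈ st.A ∧
  (∀ w ∈ W, w ∈ st.A ∧ G.Adj u w) ∧
  (∑ w ∈ W, (st.S w + st.T w)) < st.S u + st.T u ∧
  (∀ v ∈ st.A, G.Adj u v → v ∉ W → 1 ≤ st.S v)

/-- `LegalSeq G st l` means `l` is a legal sequence of `ShadeSave` operations starting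
from the state `st`. -/
def LegalSeq (G : SimpleGraph V) : State V → List (V × Finset V) → Prop
  | _, [] => True
  | st, op :: rest => LegalStep G st op.1 op.2 ∧ LegalSeq G (applyStep G st op.1 op.2) rest

/-- The final state after applying the operations in `l` in order. -/
def finalState (G : SimpleGraph V) (st : State V) (l : List (V × Finset V)) : State V :=
  l.foldl (fun s op => applyStep G s op.1 op.2) st

/-- The induced subgraph of `G` on `A`, with shield `S` and target `T`, admits a complete
legal sequence, i.e. it is `ST⁽³⁾`-`(S,T)`-degenerate. -/
def ST3DegOn (G : SimpleGraph V) (A : Finset V) (S T : V → ℕ) : Prop :=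
  ∃ l : List (V × Finset V),
    LegalSeq G ⟨A, S, T⟩ l ∧ (finalState G ⟨A, S, T⟩ l).A = ∅

/-- The induced subgraph of `G` on `A`, with shield `S` and target `T`, admits a complete
restricted (every operation saves on at most one vertex) legal sequence, i.e. it is
`ST⁽⁴⁾`-`(S,T)`-degenerate. -/
def ST4DegOn (G : SimpleGraph V) (A : Finset V) (S T : V → ℕ) : Prop :=
  ∃ l : List (V × Finset V),
    LegalSeq G ⟨A, S, T⟩ l ∧ (∀ op ∈ l, op.2.card ≤ 1) ∧
      (finalState G ⟨A, S, T⟩ l).A = ∅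

/-- `G` is `ST⁽³⁾`-`(S,T)`-degenerate. -/
def ST3Deg [Fintype V] (G : SimpleGraph V) (S T : V → ℕ) : Prop :=
  ST3DegOn G Finset.univ S T

/-- `G` is `ST⁽⁴⁾`-`(S,T)`-degenerate. -/
def ST4Deg [Fintype V] (G : SimpleGraph V) (S T : V → ℕ) : Prop :=
  ST4DegOn G Finset.univ S T

/-- The fractional strict type-3 degeneracy
`ST⁽³⁾*(G) = inf {(s+t)/t : G is ST⁽³⁾-(s,t)-degenerate}`. -/
def ST3Star [Fintype V] (G : SimpleGraph V) : ℝ :=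
  sInf { x : ℝ | ∃ s t : ℕ, 1 ≤ t ∧ ST3Deg G (fun _ => s) (fun _ => t) ∧
    x = ((s : ℝ) + t) / t }

/-- The fractional strict type-4 degeneracy
`ST⁽⁴⁾*(G) = inf {(s+t)/t : G is ST⁽⁴⁾-(s,t)-degenerate}`. -/
def ST4Star [Fintype V] (G : SimpleGraph V) : ℝ :=
  sInf { x : ℝ | ∃ s t : ℕ, 1 ≤ t ∧ ST4Deg G (fun _ => s) (fun _ => t) ∧
    x = ((s : ℝ) + t) / t }

/-- A cover `𝓗 = (L, H)` of the graph `G`. -/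
structure Cover (G : SimpleGraph V) where
  /-- The vertex type of the cover graph `H`. -/
  U : Type
  fin : Fintype U
  /-- The cover graph. -/
  H : SimpleGraph U
  /-- The lists: `L v` is the part of the partition of `V(H)` corresponding to `v`. -/
  L : V → Finset U
  part : ∀ x : U, ∃! v : V, x ∈ L v
  indep : ∀ v : V, ∀ x ∈ L v, ∀ y ∈ L v, ¬ H.Adj x y
  cross : ∀ u v : V, ∀ x ∈ L u, ∀ y ∈ L v, H.Adj x y → G.Adj u v
  matching : ∀ u v : V, G.Adj u v → ∀ x ∈ L u, ∀ y ∈ L v, ∀ y' ∈ L v,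
      H.Adj x y → H.Adj x y' → y = y'

/-- `G` is `(𝓗, b)`-colorable: there is an independent set of the cover graph meeting
every list in at least `b` vertices. -/
def Cover.Colorable {G : SimpleGraph V} (C : Cover G) (b : ℕ) : Prop :=
  ∃ I : Finset C.U, (∀ x ∈ I, ∀ y ∈ I, ¬ C.H.Adj x y) ∧ ∀ v : V, b ≤ (I ∩ C.L v).card

/-- `G` is `(a,b)`-DP-colorable. -/
def DPColorable (G : SimpleGraph V) (a b : ℕ) : Prop :=
  ∀ C : Cover G, (∀ v : V, (C.L v).card = a) → C.Colorable b

/-- The fractional DP-chromatic number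
`χ*_DP(G) = inf {a/b : G is (a,b)-DP-colorable}`. -/
def DPStar (G : SimpleGraph V) : ℝ :=
  sInf { x : ℝ | ∃ a b : ℕ, 1 ≤ b ∧ b ≤ a ∧ DPColorable G a b ∧ x = (a : ℝ) / b }

/-- `G` is `(F₁, F₂)`-DP-colorable. -/
def DPColorableFn (G : SimpleGraph V) (F₁ F₂ : V → ℕ) : Prop :=
  ∀ C : Cover G, (∀ v : V, (C.L v).card = F₁ v) →
    ∃ I : Finset C.U, (∀ x ∈ I, ∀ y ∈ I, ¬ C.H.Adj x y) ∧
      ∀ v : V, (I ∩ C.L v).card = F₂ v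

lemma exists_mem_of_sublistForall₂ {α β : Type*} {R : α → β → Prop} {l₁ : List α} {l₂ : List β}
    (h : List.SublistForall₂ R l₁ l₂) {a : α} (ha : a ∈ l₁) : ∃ b ∈ l₂, R a b := by
  induction h with
  | nil => simp at ha
  | cons hR _ ih => grind
  | cons_right _ ih => grind

section ApplyStep

variable (G : SimpleGraph V) (st : State V) (u : V) (W : Finset V)

lemma mem_applyStep_A {v : V} :
    v ∈ (applyStep G st u W).A ↔ v ∈ st.A ∧ (v = u → st.T u ≠ 1) := by
  simp only [applyStep]
  split_ifs <;> grind

lemma applyStep_A_subset : (applyStep G st u W).A ⊆ st.A := fun _ hv =>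
  ((mem_applyStep_A G st u W).1 hv).1

lemma applyStep_S_le (v : V) : (applyStep G st u W).S v ≤ st.S v := by
  simp only [applyStep]
  split_ifs <;> omega

lemma sub_one_le_applyStep_S (v : V) : st.S v - 1 ≤ (applyStep G st u W).S v := by
  simp only [applyStep]
  split_ifs <;> omega

lemma applyStep_S_of_mem {v : V} (hv : v ∈ W) : (applyStep G st u W).S v = st.S v :=
  if_neg fun h => h.2.2 hv

lemma applyStep_T_self : (applyStep G st u W).T u = if 1 < st.T u then st.T u - 1 else st.T u := by
  simp only [applyStep, true_and]

lemma applyStep_T_of_ne {v : V} (hv : v ≠ u) : (applyStep G st u W).T v = st.T v :=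
  if_neg fun h => hv h.1

lemma one_le_applyStep_T {v : V} (hv : 1 ≤ st.T v) : 1 ≤ (applyStep G st u W).T v := by
  simp only [applyStep]
  split_ifs <;> omega

end ApplyStep

/-- The state `st'` dominates `st`: it is at least as easy to complete, having fewer active
vertices and, on those, larger shields and smaller targets. Nothing is required of the values of
`S` and `T` at inactive vertices, which are meaningless in the process. Targets must be positive,
since in `applyStep` a vertex of target `0` is never removed. -/
structure Dominates (st' st : State V) : Prop where
  subset : st'.A ⊆ st.A
  shield_le : ∀ v ∈ st'.A, st.S v ≤ st'.S v
  target_le : ∀ v ∈ st'.A, st'.T v ≤ st.T v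
  target_pos : ∀ v ∈ st'.A, 1 ≤ st'.T v

/-- The saved set `W'` with which `st'` answers an operation saving `W` on `st`: the vertices of
`W` active in `st'` where `st'` has no spare shield to lose. -/
def tightPart (st' st : State V) (W : Finset V) : Finset V :=
  W.filter fun w => w ∈ st'.A ∧ st'.S w = st.S w

lemma mem_tightPart {st' st : State V} {W : Finset V} {w : V} :
    w ∈ tightPart st' st W ↔ w ∈ W ∧ w ∈ st'.A ∧ st'.S w = st.S w :=
  Finset.mem_filter

lemma tightPart_subset (st' st : State V) (W : Finset V) : tightPart st' st W ⊆ W :=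
  Finset.filter_subset _ _

namespace Dominates

variable {G : SimpleGraph V} {st' st : State V} {u v : V} {W : Finset V}

lemma shield_lt_of_notMem_tightPart (h : Dominates st' st) (hv : v ∈ st'.A) (hW : v ∈ W)
    (hvt : v ∉ tightPart st' st W) : st.S v < st'.S v :=
  (h.shield_le v hv).lt_of_ne fun heq => hvt (mem_tightPart.2 ⟨hW, hv, heq.symm⟩)

lemma sum_tightPart_le (h : Dominates st' st) (W : Finset V) :
    ∑ w ∈ tightPart st' st W, (st'.S w + st'.T w) ≤ ∑ w ∈ W, (st.S w + st.T w) :=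
  calc ∑ w ∈ tightPart st' st W, (st'.S w + st'.T w)
      ≤ ∑ w ∈ tightPart st' st W, (st.S w + st.T w) := Finset.sum_le_sum fun w hw =>
        have ⟨_, hwA, hwS⟩ := mem_tightPart.1 hw
        add_le_add hwS.le (h.target_le w hwA)
    _ ≤ ∑ w ∈ W, (st.S w + st.T w) := Finset.sum_le_sum_of_subset (tightPart_subset st' st W)

lemma legalStep_tightPart (h : Dominates st' st) (hl : LegalStep G st u W) (hu : u ∈ st'.A)
    (hT : st'.T u = st.T u) : LegalStep G st' u (tightPart st' st W) := by
  obtain ⟨-, hW, hsum, hshield⟩ := hl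
  refine ⟨hu, fun w hw => ?_, ?_, fun v hv hadj hvt => ?_⟩
  · obtain ⟨hwW, hwA, -⟩ := mem_tightPart.1 hw
    exact ⟨hwA, (hW w hwW).2⟩
  · calc ∑ w ∈ tightPart st' st W, (st'.S w + st'.T w)
        ≤ ∑ w ∈ W, (st.S w + st.T w) := h.sum_tightPart_le W
      _ < st.S u + st.T u := hsum
      _ ≤ st'.S u + st'.T u := add_le_add (h.shield_le u hu) hT.ge
  · by_cases hvW : v ∈ W
    · exact Nat.one_le_of_lt (h.shield_lt_of_notMem_tightPart hv hvW hvt)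
    · exact (hshield v (h.subset hv) hadj hvW).trans (h.shield_le v hv)

lemma applyStep_S_le_applyStep_tightPart_S (h : Dominates st' st) (hv : v ∈ st'.A) :
    (applyStep G st u W).S v ≤ (applyStep G st' u (tightPart st' st W)).S v := by
  have hS := h.shield_le v hv
  by_cases hvt : v ∈ tightPart st' st W
  · rw [applyStep_S_of_mem G st' u _ hvt]
    exact (applyStep_S_le G st u W v).trans hS
  by_cases hvW : v ∈ W
  · calc (applyStep G st u W).S v
        ≤ st.S v := applyStep_S_le G st u W v
      _ ≤ st'.S v - 1 := Nat.le_sub_one_of_lt (h.shield_lt_of_notMem_tightPart hv hvW hvt)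
      _ ≤ (applyStep G st' u (tightPart st' st W)).S v := sub_one_le_applyStep_S ..
  · simp only [applyStep, hv, h.subset hv, hvW, hvt, not_false_eq_true, and_true]
    split_ifs <;> omega

lemma applyStep_tightPart (h : Dominates st' st) (hT : st'.T u = st.T u) :
    Dominates (applyStep G st' u (tightPart st' st W)) (applyStep G st u W) := by
  have hA := applyStep_A_subset G st' u (tightPart st' st W)
  refine ⟨fun v hv => ?_, fun v hv => h.applyStep_S_le_applyStep_tightPart_S (hA hv),
    fun v hv => ?_, fun v hv => one_le_applyStep_T G st' u _ (h.target_pos v (hA hv))⟩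
  · rw [mem_applyStep_A] at hv ⊢
    exact ⟨h.subset hv.1, hT ▸ hv.2⟩
  · obtain rfl | hvu := eq_or_ne v u
    · rw [applyStep_T_self, applyStep_T_self, hT]
    · rw [applyStep_T_of_ne G st' u _ hvu, applyStep_T_of_ne G st u W hvu]
      exact h.target_le v (hA hv)

lemma applyStep_right (h : Dominates st' st) (hu : u ∈ st'.A → st'.T u < st.T u) :
    Dominates st' (applyStep G st u W) := by
  refine ⟨fun v hv => (mem_applyStep_A G st u W).2 ⟨h.subset hv, ?_⟩,
    fun v hv => (applyStep_S_le G st u W v).trans (h.shield_le v hv), fun v hv => ?_,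
    h.target_pos⟩
  · rintro rfl
    exact ((h.target_pos v hv).trans_lt (hu hv)).ne'
  · obtain rfl | hvu := eq_or_ne v u
    · have hlt := hu hv
      rw [applyStep_T_self]
      split_ifs <;> omega
    · rw [applyStep_T_of_ne G st u W hvu]
      exact h.target_le v hv

theorem exists_legalSeq {l : List (V × Finset V)} (h : Dominates st' st) (hl : LegalSeq G st l) :
    ∃ l', LegalSeq G st' l' ∧ List.SublistForall₂ (fun op' op => op'.1 = op.1 ∧ op'.2 ⊆ op.2) l' l ∧
      Dominates (finalState G st' l') (finalState G st l) := by
  induction l generalizing st' st with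
  | nil => exact ⟨[], trivial, .nil, h⟩
  | cons op l ih =>
    obtain ⟨u, W⟩ := op
    obtain ⟨hstep, hrest⟩ := hl
    by_cases hu : u ∈ st'.A ∧ st'.T u = st.T u
    · obtain ⟨l', hl', hsub, hdom⟩ := ih (h.applyStep_tightPart hu.2) hrest
      exact ⟨(u, tightPart st' st W) :: l', ⟨h.legalStep_tightPart hstep hu.1 hu.2, hl'⟩,
        .cons ⟨rfl, tightPart_subset st' st W⟩ hsub, hdom⟩
    · have hlt (huA : u ∈ st'.A) : st'.T u < st.T u :=
        (h.target_le u huA).lt_of_ne fun hT => hu ⟨huA, hT⟩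
      obtain ⟨l', hl', hsub, hdom⟩ := ih (h.applyStep_right hlt) hrest
      exact ⟨l', hl', .cons_right hsub, hdom⟩

lemma A_eq_empty (h : Dominates st' st) (hst : st.A = ∅) : st'.A = ∅ :=
  Finset.subset_empty.1 (hst ▸ h.subset)

end Dominates

theorem stDeg_mono_general (G : SimpleGraph V) {A A' : Finset V} {S S' T T' : V → ℕ}
    (hA : A' ⊆ A) (hT' : ∀ v ∈ A', 1 ≤ T' v) (hS : ∀ v ∈ A', S v ≤ S' v)
    (hTT' : ∀ v ∈ A', T' v ≤ T v) :
    (ST3DegOn G A S T → ST3DegOn G A' S' T') ∧ (ST4DegOn G A S T → ST4DegOn G A' S' T') := by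
  have hdom : Dominates ⟨A', S', T'⟩ ⟨A, S, T⟩ := ⟨hA, hS, hTT', hT'⟩
  constructor
  · rintro ⟨l, hl, hempty⟩
    obtain ⟨l', hl', -, hfinal⟩ := hdom.exists_legalSeq hl
    exact ⟨l', hl', hfinal.A_eq_empty hempty⟩
  · rintro ⟨l, hl, hcard, hempty⟩
    obtain ⟨l', hl', hsub, hfinal⟩ := hdom.exists_legalSeq hl
    refine ⟨l', hl', fun op' hop' => ?_, hfinal.A_eq_empty hempty⟩
    obtain ⟨op, hop, -, hsaved⟩ := exists_mem_of_sublistForall₂ hsub hop'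
    exact (Finset.card_le_card hsaved).trans (hcard op hop)

/-- Let `G` be a (possibly empty) graph.  Suppose `S` and `S'` are shields of
`G` satisfying `S(v) ≤ S'(v)` for each vertex `v`, and suppose `T` and `T'` are targets of `G`
satisfying `T(v) ≥ T'(v)` for each vertex `v`.  Then, for each `j ∈ {3,4}`, if `G` is
`ST⁽ʲ⁾`-`(S,T)`-degenerate, then `G` is `ST⁽ʲ⁾`-`(S',T')`-degenerate. -/
theorem stDeg_mono {V : Type} [Fintype V] (G : SimpleGraph V)
    (S S' T T' : V → ℕ) (hT : ∀ v, 1 ≤ T v) (hT' : ∀ v, 1 ≤ T' v)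
    (hS : ∀ v, S v ≤ S' v) (hTT' : ∀ v, T' v ≤ T v) :
    (ST3Deg G S T → ST3Deg G S' T') ∧ (ST4Deg G S T → ST4Deg G S' T') :=
  stDeg_mono_general G subset_rfl (fun v _ => hT' v) (fun v _ => hS v) fun v _ => hTT' v

end StrictDeg
end
end

section
/- For each j ∈ {3,4}: if a nonempty graph G is ST^(j)-(S,T)-degenerate for some shield S and target T of G, and s = max_{v ∈ V(G)} S(v) and t = min_{v ∈ V(G)} T(v), then G is ST^(j)-(s,t)-degenerate, and consequently ST^(j)*(G) ≤ (s+t)/t. -/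
/-!
Compare two processes on the same vertex set, where the second has pointwise larger shields and
smaller positive targets. The second can shadow the first, with the vertex sets staying equal:
when the first operates at `u` and its target there is still larger than that of the second, the
second waits; when the targets at `u` agree, the second operates at `u` too, but saves only those
vertices at which it has no surplus shield. A vertex with surplus shield can afford to lose one,
and on the vertices still saved the sum of shield and target is no larger than before, so the
operation is legal. Saved sets only shrink, so restricted sequences stay restricted.
-/

open scoped Classical

noncomputable section

namespace StrictDeg

variable {V : Type}

/-- `st'.Relaxes st`: the state `st'` has the same active vertices as `st`, larger shields, and
smaller positive targets. This is the invariant kept while `st'` shadows a legal sequence of `st`.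
The functions live on all of `V`, so the inequalities are required at inactive vertices too. -/
structure State.Relaxes (st' st : State V) : Prop where
  active_eq : st'.A = st.A
  shield_le : ∀ v, st.S v ≤ st'.S v
  target_le : ∀ v, st'.T v ≤ st.T v
  target_pos : ∀ v, 0 < st'.T v

/-- The vertices of `W` at which `st'` has no surplus shield over `st`: those that `st'` still
saves when it imitates an operation of `st` that saves `W`. -/
def State.tightSaves (st' st : State V) (W : Finset V) : Finset V :=
  {w ∈ W | st'.S w = st.S w}

namespace State

variable {G : SimpleGraph V} {st st' : State V} {u v : V} {W : Finset V}

lemma mem_tightSaves : v ∈ st'.tightSaves st W ↔ v ∈ W ∧ st'.S v = st.S v :=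
  Finset.mem_filter

lemma tightSaves_subset : st'.tightSaves st W ⊆ W :=
  Finset.filter_subset _ W

namespace Relaxes

lemma applyStep_right (h : st'.Relaxes st) (hu : st'.T u < st.T u) :
    st'.Relaxes (applyStep G st u W) where
  active_eq := by
    have hne : st.T u ≠ 1 := by have := h.target_pos u; omega
    simp [applyStep, hne, h.active_eq]
  shield_le v := by
    have := h.shield_le v
    simp only [applyStep]
    split_ifs <;> omega
  target_le v := by
    have := h.target_le v
    simp only [applyStep]
    split_ifs with hv
    · obtain ⟨rfl, -⟩ := hv
      omega
    · exact this
  target_pos := h.target_pos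

lemma applyStep_tightSaves (h : st'.Relaxes st) (hu : st'.T u = st.T u) :
    (applyStep G st' u (st'.tightSaves st W)).Relaxes (applyStep G st u W) where
  active_eq := by simp only [applyStep, hu, h.active_eq]
  shield_le v := by
    simp only [applyStep, h.active_eq, mem_tightSaves]
    by_cases hv : v ∈ W
    · rcases (h.shield_le v).eq_or_lt with heq | hlt
      · simp [hv, heq]
      · have hsurplus : st.S v ≤ st'.S v - 1 := Nat.le_sub_one_of_lt hlt
        simp only [hv, hlt.ne']
        split_ifs <;> omega
    · have hle := h.shield_le v
      simp only [hv, false_and]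
      split_ifs <;> omega
  target_le v := by
    have := h.target_le v
    simp only [applyStep, hu]
    split_ifs <;> omega
  target_pos v := by
    have := h.target_pos v
    simp only [applyStep]
    split_ifs <;> omega

lemma sum_tightSaves_le (h : st'.Relaxes st) :
    ∑ w ∈ st'.tightSaves st W, (st'.S w + st'.T w) ≤ ∑ w ∈ W, (st.S w + st.T w) :=
  calc
    _ ≤ ∑ w ∈ st'.tightSaves st W, (st.S w + st.T w) :=
      Finset.sum_le_sum fun w hw ↦
        add_le_add (mem_tightSaves.1 hw).2.le (h.target_le w)
    _ ≤ _ := Finset.sum_le_sum_of_subset tightSaves_subset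

lemma legalStep_tightSaves (h : st'.Relaxes st) (hu : st'.T u = st.T u)
    (hstep : LegalStep G st u W) : LegalStep G st' u (st'.tightSaves st W) := by
  obtain ⟨hmem, hnbr, hsum, hshield⟩ := hstep
  rw [← h.active_eq] at hmem hnbr hshield
  refine ⟨hmem, fun w hw ↦ hnbr w (tightSaves_subset hw), ?_, fun v hv hadj hvW ↦ ?_⟩
  · calc
      _ ≤ ∑ w ∈ W, (st.S w + st.T w) := h.sum_tightSaves_le
      _ < st.S u + st.T u := hsum
      _ ≤ st'.S u + st'.T u := add_le_add (h.shield_le u) hu.ge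
  · have hle := h.shield_le v
    by_cases hv' : v ∈ W
    · have hne : st'.S v ≠ st.S v := fun heq ↦ hvW (mem_tightSaves.2 ⟨hv', heq⟩)
      omega
    · exact (hshield v hv hadj hv').trans hle

lemma exists_legalSeq {l : List (V × Finset V)} (h : st'.Relaxes st) (hl : LegalSeq G st l) :
    ∃ l', LegalSeq G st' l' ∧ (∀ op' ∈ l', ∃ op ∈ l, op'.2 ⊆ op.2) ∧
      (finalState G st' l').A = (finalState G st l).A := by
  induction l generalizing st st' with
  | nil => exact ⟨[], trivial, by simp, h.active_eq⟩
  | cons op l ih =>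
    obtain ⟨u, W⟩ := op
    obtain ⟨hstep, hl⟩ := hl
    rcases (h.target_le u).lt_or_eq with hlt | heq
    · obtain ⟨l', hl', hsub, hfin⟩ := ih (h.applyStep_right hlt) hl
      refine ⟨l', hl', fun op' hop' ↦ ?_, hfin⟩
      exact (hsub op' hop').imp fun op hop ↦ hop.imp_left (List.mem_cons_of_mem _)
    · obtain ⟨l', hl', hsub, hfin⟩ := ih (h.applyStep_tightSaves heq) hl
      refine ⟨(u, st'.tightSaves st W) :: l', ⟨h.legalStep_tightSaves heq hstep, hl'⟩, ?_, hfin⟩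
      rintro op' (_ | ⟨_, hop'⟩)
      · exact ⟨(u, W), List.mem_cons_self, tightSaves_subset⟩
      · exact (hsub op' hop').imp fun op hop ↦ hop.imp_left (List.mem_cons_of_mem _)

end Relaxes

end State

section Monotonicity

variable {G : SimpleGraph V} {A : Finset V} {S S' T T' : V → ℕ}

theorem ST3DegOn.mono (h : ST3DegOn G A S T) (hS : ∀ v, S v ≤ S' v) (hT : ∀ v, T' v ≤ T v)
    (hT' : ∀ v, 0 < T' v) : ST3DegOn G A S' T' := by
  obtain ⟨l, hl, hfin⟩ := h
  have hrel : State.Relaxes ⟨A, S', T'⟩ ⟨A, S, T⟩ := ⟨rfl, hS, hT, hT'⟩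
  obtain ⟨l', hl', -, hfin'⟩ := hrel.exists_legalSeq hl
  exact ⟨l', hl', hfin'.trans hfin⟩

theorem ST4DegOn.mono (h : ST4DegOn G A S T) (hS : ∀ v, S v ≤ S' v) (hT : ∀ v, T' v ≤ T v)
    (hT' : ∀ v, 0 < T' v) : ST4DegOn G A S' T' := by
  obtain ⟨l, hl, hcard, hfin⟩ := h
  have hrel : State.Relaxes ⟨A, S', T'⟩ ⟨A, S, T⟩ := ⟨rfl, hS, hT, hT'⟩
  obtain ⟨l', hl', hsub, hfin'⟩ := hrel.exists_legalSeq hl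
  refine ⟨l', hl', fun op' hop' ↦ ?_, hfin'.trans hfin⟩
  obtain ⟨op, hop, hle⟩ := hsub op' hop'
  exact (Finset.card_le_card hle).trans (hcard op hop)

end Monotonicity

lemma sInf_shield_target_ratio_le {P : ℕ → ℕ → Prop} {s t : ℕ} (ht : 1 ≤ t) (h : P s t) :
    sInf {x : ℝ | ∃ s t : ℕ, 1 ≤ t ∧ P s t ∧ x = ((s : ℝ) + t) / t} ≤ ((s : ℝ) + t) / t := by
  refine csInf_le ⟨0, ?_⟩ ⟨s, t, ht, h, rfl⟩
  rintro _ ⟨a, b, -, -, rfl⟩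
  positivity

theorem stDeg_const_of_deg_general [Fintype V] {G : SimpleGraph V} {S T : V → ℕ} {s t : ℕ}
    (hs : ∀ v, S v ≤ s) (ht : ∀ v, t ≤ T v) (ht_pos : 1 ≤ t) :
    (ST3Deg G S T →
      ST3Deg G (fun _ ↦ s) (fun _ ↦ t) ∧ ST3Star G ≤ ((s : ℝ) + t) / t) ∧
    (ST4Deg G S T →
      ST4Deg G (fun _ ↦ s) (fun _ ↦ t) ∧ ST4Star G ≤ ((s : ℝ) + t) / t) := by
  constructor <;> intro h
  · have hdeg : ST3Deg G (fun _ ↦ s) (fun _ ↦ t) := ST3DegOn.mono h hs ht fun _ ↦ ht_pos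
    exact ⟨hdeg, sInf_shield_target_ratio_le ht_pos hdeg⟩
  · have hdeg : ST4Deg G (fun _ ↦ s) (fun _ ↦ t) := ST4DegOn.mono h hs ht fun _ ↦ ht_pos
    exact ⟨hdeg, sInf_shield_target_ratio_le ht_pos hdeg⟩

/-- For each `j ∈ {3,4}`: if a nonempty graph `G` is
`ST⁽ʲ⁾`-`(S,T)`-degenerate for some shield `S` and target `T` of `G`, and
`s = max_{v} S(v)` and `t = min_{v} T(v)`, then `G` is `ST⁽ʲ⁾`-`(s,t)`-degenerate, and
consequently `ST⁽ʲ⁾*(G) ≤ (s+t)/t`. -/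
theorem stDeg_const_of_deg {V : Type} [Fintype V] [Nonempty V] (G : SimpleGraph V)
    (S T : V → ℕ) (hT : ∀ v, 1 ≤ T v) (s t : ℕ)
    (hs : IsGreatest (Set.range S) s) (ht : IsLeast (Set.range T) t) :
    (ST3Deg G S T →
      ST3Deg G (fun _ => s) (fun _ => t) ∧ ST3Star G ≤ ((s : ℝ) + t) / t) ∧
    (ST4Deg G S T →
      ST4Deg G (fun _ => s) (fun _ => t) ∧ ST4Star G ≤ ((s : ℝ) + t) / t) := by
  obtain ⟨v, rfl⟩ := ht.1
  exact stDeg_const_of_deg_general (fun w ↦ hs.2 ⟨w, rfl⟩) (fun w ↦ ht.2 ⟨w, rfl⟩) (hT v)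

end StrictDeg
end
end

section
/- Suppose G is a nonempty graph with shield S and target T. Suppose G' is a graph such that V(G') = V(G) ∪ {z} for some z ∉ V(G) and the induced subgraph G'[V(G)] equals G. Suppose S' and T' are a shield and a target of G' with S'(v) = S(v) and T'(v) = T(v) for all v ∈ V(G), and S'(z) ≥ Σ_{v ∈ N_{G'}(z)} T(v). Then: (i) if G is ST^(3)-(S,T)-degenerate then G' is ST^(3)-(S',T')-degenerate, and (ii) if G is ST^(4)-(S,T)-degenerate then G' is ST^(4)-(S',T')-degenerate. -/
/-!
Replay on `G'` the given complete legal sequence of `G`, with the same saved sets, never saving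
the new vertex `z`; then remove `z` by operations that save nothing.

The only new legality requirement is that the shield of `z` stays nonnegative. Each operation at a
neighbor `v` of `z` lowers the shield of `z` by one, and it also lowers the remaining demand of `v`
by one: its target drops, or `v` leaves the graph when its target is `1`. Hence the inequality
`∑ T(v) ≤ S'(z)`, summed over the neighbors `v` of `z` still in the graph, is invariant, and at an
operation on a neighbor its left-hand side is at least `1`.
-/

open scoped Classical

noncomputable section

namespace StrictDeg

variable {V : Type}

section Sequences

variable {G : SimpleGraph V}

lemma finalState_append (st : State V) (l₁ l₂ : List (V × Finset V)) :
    finalState G st (l₁ ++ l₂) = finalState G (finalState G st l₁) l₂ :=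
  List.foldl_append

lemma LegalSeq.append {st : State V} {l₁ l₂ : List (V × Finset V)} (h₁ : LegalSeq G st l₁)
    (h₂ : LegalSeq G (finalState G st l₁) l₂) : LegalSeq G st (l₁ ++ l₂) := by
  induction l₁ generalizing st with
  | nil => exact h₂
  | cons op l ih => exact ⟨h₁.1, ih h₁.2 h₂⟩

/-- `l` is a complete `(G[A], S, T)`-legal sequence, where `st = (A, S, T)`. -/
def CompleteSeq (G : SimpleGraph V) (st : State V) (l : List (V × Finset V)) : Prop :=
  LegalSeq G st l ∧ (finalState G st l).A = ∅

lemma LegalSeq.append_completeSeq {st : State V} {l₁ l₂ : List (V × Finset V)}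
    (h₁ : LegalSeq G st l₁) (h₂ : CompleteSeq G (finalState G st l₁) l₂) :
    CompleteSeq G st (l₁ ++ l₂) :=
  ⟨h₁.append h₂.1, (congrArg State.A (finalState_append st l₁ l₂)).trans h₂.2⟩

lemma legalStep_empty_of_eq_singleton {st : State V} {z : V} (hA : st.A = {z})
    (hT : 0 < st.T z) : LegalStep G st z ∅ := by
  refine ⟨by simp [hA], by simp, by rw [Finset.sum_empty]; omega, fun v hv hadj _ ↦ ?_⟩
  obtain rfl : v = z := by simpa [hA] using hv
  exact absurd hadj G.irrefl

lemma completeSeq_replicate_of_eq_singleton {st : State V} {z : V} (hA : st.A = {z})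
    (hT : 0 < st.T z) : CompleteSeq G st (List.replicate (st.T z) (z, ∅)) := by
  obtain ⟨n, hn⟩ : ∃ n, st.T z = n + 1 := ⟨st.T z - 1, by omega⟩
  rw [hn]
  induction n generalizing st with
  | zero =>
    exact ⟨⟨legalStep_empty_of_eq_singleton hA hT, trivial⟩,
      by simp [finalState, applyStep, hA, hn]⟩
  | succ n ih =>
    have hT' : (applyStep G st z ∅).T z = n + 1 := by simp [applyStep, hn]
    have hrest : CompleteSeq G (applyStep G st z ∅) (List.replicate (n + 1) (z, ∅)) :=
      ih (by simp [applyStep, hA, hn]) (by omega) hT'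
    exact ⟨⟨legalStep_empty_of_eq_singleton hA hT, hrest.1⟩, hrest.2⟩

end Sequences

section Map

lemma extend_comp_self {α β γ : Type*} (f : α → β) (g : β → γ) :
    Function.extend f (g ∘ f) g = g := by
  funext b
  rw [Function.extend_def]
  split_ifs with h
  exacts [congrArg g h.choose_spec, rfl]

variable {V' : Type} {G : SimpleGraph V} {G' : SimpleGraph V'}

/-- The state of `G'` obtained by transporting a state of `G` along an embedding `f`. Vertices
outside the range of `f` are inactive and carry the values of `S₀` and `T₀`. -/
def State.map (f : V ↪ V') (S₀ T₀ : V' → ℕ) (st : State V) : State V' where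
  A := st.A.map f
  S := Function.extend f st.S S₀
  T := Function.extend f st.T T₀

lemma applyStep_map (f : G ↪g G') (S₀ T₀ : V' → ℕ) (st : State V) (u : V) (W : Finset V) :
    applyStep G' (st.map f.toEmbedding S₀ T₀) (f u) (W.map f.toEmbedding) =
      (applyStep G st u W).map f.toEmbedding S₀ T₀ := by
  simp only [State.map, applyStep, State.mk.injEq, RelEmbedding.coe_toEmbedding]
  refine ⟨?_, ?_, ?_⟩
  · by_cases h : st.T u = 1
    · simp [f.injective.extend_apply, h, Finset.map_erase]
    · simp [f.injective.extend_apply, h]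
  · funext x
    by_cases hx : ∃ v, f v = x
    · obtain ⟨v, rfl⟩ := hx
      simp [f.injective.extend_apply]
    · have hxA : x ∉ st.A.map f.toEmbedding := by
        simp only [Finset.mem_map]
        exact fun ⟨v, _, hv⟩ ↦ hx ⟨v, hv⟩
      simp [Function.extend_apply' _ _ _ hx, hxA]
  · funext x
    by_cases hx : ∃ v, f v = x
    · obtain ⟨v, rfl⟩ := hx
      simp [f.injective.extend_apply]
    · have hxu : x ≠ f u := fun h ↦ hx ⟨u, h.symm⟩
      simp [Function.extend_apply' _ _ _ hx, hxu]

lemma LegalStep.map (f : G ↪g G') (S₀ T₀ : V' → ℕ) {st : State V} {u : V} {W : Finset V}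
    (h : LegalStep G st u W) :
    LegalStep G' (st.map f.toEmbedding S₀ T₀) (f u) (W.map f.toEmbedding) := by
  simpa [LegalStep, State.map, f.injective.extend_apply] using h

lemma CompleteSeq.map (f : G ↪g G') (S₀ T₀ : V' → ℕ) {st : State V} {l : List (V × Finset V)}
    (h : CompleteSeq G st l) :
    CompleteSeq G' (st.map f.toEmbedding S₀ T₀)
      (l.map (Prod.map f (Finset.map f.toEmbedding))) := by
  induction l generalizing st with
  | nil => exact ⟨trivial, Finset.map_eq_empty.mpr h.2⟩
  | cons op l ih =>
    obtain ⟨⟨hop, hl⟩, hfin⟩ := h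
    have hrest := ih ⟨hl, hfin⟩
    rw [← applyStep_map] at hrest
    exact ⟨⟨hop.map f S₀ T₀, hrest.1⟩, hrest.2⟩

end Map

section Demand

variable {G : SimpleGraph V} {st : State V} {u : V}

/-- The demand around `z`: the total target of the active neighbors of `z`. It is the number of
operations at neighbors of `z` in any complete sequence. -/
def demand (G : SimpleGraph V) (st : State V) (z : V) : ℕ :=
  ∑ v ∈ st.A with G.Adj z v, st.T v

lemma demand_applyStep (z : V) (W : Finset V) (hu : u ∈ st.A) (hT : 0 < st.T u) :
    demand G (applyStep G st u W) z + (if G.Adj z u then 1 else 0) = demand G st z := by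
  have hother : (∑ v ∈ st.A.erase u, if G.Adj z v then (applyStep G st u W).T v else 0) =
      ∑ v ∈ st.A.erase u, if G.Adj z v then st.T v else 0 :=
    Finset.sum_congr rfl fun v hv ↦ by simp [applyStep, Finset.ne_of_mem_erase hv]
  simp only [demand, Finset.sum_filter]
  rw [← Finset.sum_erase_add st.A _ hu, ← hother]
  by_cases h1 : st.T u = 1
  · have hA : (applyStep G st u W).A = st.A.erase u := by simp [applyStep, h1]
    rw [hA, h1]
  · have hA : (applyStep G st u W).A = st.A := by simp [applyStep, h1]
    have hTu : (applyStep G st u W).T u + 1 = st.T u := by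
      have : 1 < st.T u := by omega
      simp only [applyStep, this, and_self, if_true]
      omega
    rw [hA, ← Finset.sum_erase_add st.A _ hu, ← hTu]
    split_ifs <;> omega

lemma applyStep_T_pos (W : Finset V) (hT : ∀ v ∈ st.A, 0 < st.T v) :
    ∀ v ∈ (applyStep G st u W).A, 0 < (applyStep G st u W).T v := by
  intro v hv
  have hvA : v ∈ st.A := by
    simp only [applyStep] at hv
    split_ifs at hv
    exacts [Finset.mem_of_mem_erase hv, hv]
  have := hT v hvA
  simp only [applyStep]
  split_ifs <;> omega

lemma notMem_applyStep {z : V} (W : Finset V) (hz : z ∉ st.A) :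
    z ∉ (applyStep G st u W).A := by
  simp only [applyStep]
  split_ifs
  exacts [fun h ↦ hz (Finset.mem_of_mem_erase h), hz]

end Demand

section InsertVertex

variable {G : SimpleGraph V} {st : State V} {z u : V} {W : Finset V}

/-- The state obtained from `st` by activating the vertex `z` with shield `s` and target `t`. -/
@[simps]
def State.insertVertex (st : State V) (z : V) (s t : ℕ) : State V where
  A := insert z st.A
  S := Function.update st.S z s
  T := Function.update st.T z t

lemma applyStep_insertVertex (s t : ℕ) (hzu : z ≠ u) (hzW : z ∉ W) :
    applyStep G (st.insertVertex z s t) u W =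
      (applyStep G st u W).insertVertex z (s - if G.Adj z u then 1 else 0) t := by
  simp only [State.insertVertex, applyStep, State.mk.injEq, Function.update_of_ne hzu.symm]
  refine ⟨?_, ?_, ?_⟩
  · rw [apply_ite (insert z), Finset.erase_insert_of_ne hzu]
  · funext v
    obtain rfl | hv := eq_or_ne v z
    · by_cases h : G.Adj v u <;> simp [h, G.adj_comm u v, hzW]
    · simp [hv]
  · funext v
    obtain rfl | hv := eq_or_ne v z <;> simp [*]

lemma LegalStep.insertVertex {s : ℕ} (t : ℕ) (h : LegalStep G st u W) (hz : z ∉ st.A)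
    (hs : G.Adj z u → 0 < s) : LegalStep G (st.insertVertex z s t) u W := by
  obtain ⟨hu, hW, hlt, hshield⟩ := h
  have hS {v : V} (hv : v ∈ st.A) : (st.insertVertex z s t).S v = st.S v :=
    Function.update_of_ne (ne_of_mem_of_not_mem hv hz) ..
  have hT {v : V} (hv : v ∈ st.A) : (st.insertVertex z s t).T v = st.T v :=
    Function.update_of_ne (ne_of_mem_of_not_mem hv hz) ..
  have hsum : ∑ w ∈ W, ((st.insertVertex z s t).S w + (st.insertVertex z s t).T w) =
      ∑ w ∈ W, (st.S w + st.T w) :=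
    Finset.sum_congr rfl fun w hw ↦ by rw [hS (hW w hw).1, hT (hW w hw).1]
  refine ⟨Finset.mem_insert_of_mem hu,
    fun w hw ↦ ⟨Finset.mem_insert_of_mem (hW w hw).1, (hW w hw).2⟩, ?_, fun v hv hadj hvW ↦ ?_⟩
  · rwa [hsum, hS hu, hT hu]
  · obtain rfl | hvA := Finset.mem_insert.mp hv
    · simpa [Nat.one_le_iff_ne_zero, Nat.pos_iff_ne_zero] using hs hadj.symm
    · exact (hshield v hvA hadj hvW).trans_eq (hS hvA).symm

lemma LegalSeq.insertVertex {s : ℕ} (t : ℕ) {l : List (V × Finset V)} (h : LegalSeq G st l)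
    (hz : z ∉ st.A) (hT : ∀ v ∈ st.A, 0 < st.T v) (hs : demand G st z ≤ s) :
    LegalSeq G (st.insertVertex z s t) l ∧ ∃ s',
      finalState G (st.insertVertex z s t) l = (finalState G st l).insertVertex z s' t := by
  induction l generalizing st s with
  | nil => exact ⟨trivial, s, rfl⟩
  | cons op l ih =>
    obtain ⟨u, W⟩ := op
    obtain ⟨hop : LegalStep G st u W, hl⟩ := h
    have hdemand := demand_applyStep (G := G) z W hop.1 (hT u hop.1)
    have hs' : demand G (applyStep G st u W) z ≤ s - if G.Adj z u then 1 else 0 := by omega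
    have hspos (hadj : G.Adj z u) : 0 < s := by
      rw [if_pos hadj] at hdemand
      omega
    have hstep := applyStep_insertVertex (G := G) (st := st) s t
      (ne_of_mem_of_not_mem hop.1 hz).symm (fun hzW ↦ hz (hop.2.1 z hzW).1)
    obtain ⟨hlegal, s', hfinal⟩ := ih hl (notMem_applyStep W hz) (applyStep_T_pos W hT) hs'
    rw [← hstep] at hlegal hfinal
    exact ⟨⟨hop.insertVertex t hz hspos, hlegal⟩, s', hfinal⟩

lemma CompleteSeq.insertVertex {s t : ℕ} {l : List (V × Finset V)} (h : CompleteSeq G st l)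
    (hz : z ∉ st.A) (hT : ∀ v ∈ st.A, 0 < st.T v) (hs : demand G st z ≤ s) (ht : 0 < t) :
    CompleteSeq G (st.insertVertex z s t) (l ++ List.replicate t (z, ∅)) := by
  obtain ⟨hlegal, s', hfinal⟩ := h.1.insertVertex t hz hT hs
  refine hlegal.append_completeSeq ?_
  have hTz : (finalState G (st.insertVertex z s t) l).T z = t := by
    simp [hfinal]
  have hA : (finalState G (st.insertVertex z s t) l).A = {z} := by
    simp [hfinal, h.2]
  simpa only [hTz] using completeSeq_replicate_of_eq_singleton hA (hTz.symm ▸ ht)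

end InsertVertex

theorem stDeg_append_vertex_general {V V' : Type} {G : SimpleGraph V} {G' : SimpleGraph V'}
    (f : G ↪g G') (A : Finset V) (z : V') (hzA : z ∉ A.map f.toEmbedding) (S' T' : V' → ℕ)
    (hT : ∀ v ∈ A, 0 < T' (f v)) (hTz : 0 < T' z)
    (hz : ∑ v ∈ A with G'.Adj z (f v), T' (f v) ≤ S' z) :
    (ST3DegOn G A (S' ∘ f) (T' ∘ f) →
        ST3DegOn G' (Finset.cons z (A.map f.toEmbedding) hzA) S' T') ∧
      (ST4DegOn G A (S' ∘ f) (T' ∘ f) →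
        ST4DegOn G' (Finset.cons z (A.map f.toEmbedding) hzA) S' T') := by
  have hmap : State.map f.toEmbedding S' T' ⟨A, S' ∘ f, T' ∘ f⟩ =
      ⟨A.map f.toEmbedding, S', T'⟩ := by
    simp [State.map, extend_comp_self]
  have hinsert : State.insertVertex ⟨A.map f.toEmbedding, S', T'⟩ z (S' z) (T' z) =
      ⟨Finset.cons z (A.map f.toEmbedding) hzA, S', T'⟩ := by
    simp [State.insertVertex]
  have hdemand : demand G' ⟨A.map f.toEmbedding, S', T'⟩ z ≤ S' z := by
    simpa [demand, Finset.sum_filter] using hz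
  have hcomplete {l} (hl : CompleteSeq G ⟨A, S' ∘ f, T' ∘ f⟩ l) :
      CompleteSeq G' ⟨Finset.cons z (A.map f.toEmbedding) hzA, S', T'⟩
        (l.map (Prod.map f (Finset.map f.toEmbedding)) ++ List.replicate (T' z) (z, ∅)) := by
    rw [← hinsert]
    exact (hmap ▸ hl.map f S' T').insertVertex hzA (by simpa using hT) hdemand hTz
  refine ⟨fun ⟨l, hl⟩ ↦ ⟨_, hcomplete hl⟩, fun ⟨l, hl, hcard, hfin⟩ ↦ ?_⟩
  obtain ⟨hl', hfin'⟩ := hcomplete ⟨hl, hfin⟩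
  refine ⟨_, hl', fun op hop ↦ ?_, hfin'⟩
  obtain hop | hop := List.mem_append.mp hop
  · obtain ⟨op, hopl, rfl⟩ := List.mem_map.mp hop
    exact (Finset.card_map _).trans_le (hcard op hopl)
  · simp [List.eq_of_mem_replicate hop]

/-- Suppose `G` is a nonempty graph with shield `S` and target `T`.  Suppose
`G'` is a graph whose vertex set is that of `G` together with one new vertex `z` (here `G'` is
a graph on `Option V`, `z = none`, and the induced subgraph of `G'` on the old vertices is
`G`).  Suppose `S'` and `T'` are a shield and a target of `G'` agreeing with `S` and `T` on the
old vertices, and `S'(z) ≥ Σ_{v ∈ N_{G'}(z)} T(v)`.  Then (i) if `G` is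
`ST⁽³⁾`-`(S,T)`-degenerate then `G'` is `ST⁽³⁾`-`(S',T')`-degenerate, and (ii) if `G` is
`ST⁽⁴⁾`-`(S,T)`-degenerate then `G'` is `ST⁽⁴⁾`-`(S',T')`-degenerate. -/
theorem stDeg_append_vertex {V : Type} [Fintype V] [Nonempty V]
    (G : SimpleGraph V) (G' : SimpleGraph (Option V))
    (hind : ∀ u v : V, G'.Adj (some u) (some v) ↔ G.Adj u v)
    (S T : V → ℕ) (hT : ∀ v, 1 ≤ T v)
    (S' T' : Option V → ℕ) (hT' : ∀ v, 1 ≤ T' v)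
    (hS'eq : ∀ v : V, S' (some v) = S v) (hT'eq : ∀ v : V, T' (some v) = T v)
    (hz : (∑ v ∈ Finset.univ.filter (fun v : V => G'.Adj none (some v)), T v) ≤ S' none) :
    (ST3Deg G S T → ST3Deg G' S' T') ∧ (ST4Deg G S T → ST4Deg G' S' T') := by
  obtain ⟨rfl, rfl⟩ : S' ∘ some = S ∧ T' ∘ some = T := ⟨funext hS'eq, funext hT'eq⟩
  exact stDeg_append_vertex_general ⟨Function.Embedding.some, hind _ _⟩ Finset.univ none (by simp)
    S' T' (fun v _ ↦ hT v) (hT' none) hz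

end StrictDeg
end
end

section
/- For r ∈ ℕ, let G = P_{2r−1} be the path whose vertices in order are v_1,…,v_{2r−1}. Let S be the shield of G defined by S(v_1) = S(v_{2r−1}) = 1 and S(v_i) = r+1 for all i with 2 ≤ i ≤ 2r−2, and let T be the target of G defined by T(v_i) = r for all i ∈ {1,…,2r−1}. Then G is ST^(4)-(S,T)-degenerate. -/
/-!
All operations are first performed at the even-indexed vertices `v_{2j}`, each saving one of the
two neighbors. If `v_{2j}` has so far saved its left neighbor `a j` times and its right neighbor
`b j` times, then its target is `r - a j - b j` and its shield is untouched, while `v_{2j+1}` has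
shield `r + 1 - a j - b (j + 1)` and its target is untouched. The conventions `a 0 = r` and
`b m = r` on `P_{2m-1}` account for the smaller shield of the two ends.

In these terms `v_{2j}` may save its left neighbor until `a j = a (j - 1)` and its right neighbor
until `b j = b (j + 1)`, as long as no shield or target is exhausted. So one sweep from left to
right achieves `a j = r - j` and a second one from right to left achieves `b j = min j r`. As these
add up to `r`, every `v_{2j}` is then gone, and the remaining vertices are independent.
-/

open scoped Classical

noncomputable section

namespace StrictDeg

variable {V : Type}

/-- The state `st` has shield `s` and target `t`, where a vertex of target `0` counts as deleted
and the values of `st.S` and `st.T` at deleted vertices are ignored. -/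
structure State.Encodes (st : State V) (s t : V → ℕ) : Prop where
  mem_iff : ∀ v, v ∈ st.A ↔ t v ≠ 0
  shield_eq : ∀ v ∈ st.A, st.S v = s v
  target_eq : ∀ v ∈ st.A, st.T v = t v

/-- The subgraph induced by the vertices of nonzero target is `ST⁽⁴⁾`-`(s, t)`-degenerate.
Marking deleted vertices by target `0` makes an operation a mere change of `s` and `t`.
(No state encodes a target of infinite support, for which the predicate is vacuous.) -/
def Clearable (G : SimpleGraph V) (s t : V → ℕ) : Prop :=
  ∀ st : State V, st.Encodes s t → ST4DegOn G st.A st.S st.T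

/-- The shield after `k` operations at `u` that save `W`. -/
def shade (G : SimpleGraph V) (s : V → ℕ) (u : V) (W : Finset V) (k : ℕ) : V → ℕ :=
  fun v => if G.Adj u v ∧ v ∉ W then s v - k else s v

section ShadeSave

variable {G : SimpleGraph V} {s t : V → ℕ} {u : V} {W : Finset V}

theorem shade_zero : shade G s u W 0 = s := by
  funext v
  simp only [shade, Nat.sub_zero, ite_self]

theorem shade_shade (i k : ℕ) : shade G (shade G s u W i) u W k = shade G s u W (i + k) := by
  funext v
  simp only [shade]
  split_ifs <;> omega

theorem Clearable.st4Deg [Fintype V] (h : Clearable G s t) (ht : ∀ v, t v ≠ 0) : ST4Deg G s t :=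
  h ⟨Finset.univ, s, t⟩ ⟨fun v => by simp [ht v], fun _ _ => rfl, fun _ _ => rfl⟩

theorem ST4DegOn.of_applyStep {st : State V} (hstep : LegalStep G st u W) (hW : W.card ≤ 1)
    (h : ST4DegOn G (applyStep G st u W).A (applyStep G st u W).S (applyStep G st u W).T) :
    ST4DegOn G st.A st.S st.T := by
  obtain ⟨l, hlegal, hcard, hempty⟩ := h
  exact ⟨(u, W) :: l, ⟨hstep, hlegal⟩, List.forall_mem_cons.2 ⟨hW, hcard⟩, hempty⟩

theorem State.Encodes.step {st : State V} (h : st.Encodes s t) (hu : u ∈ st.A) :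
    (applyStep G st u W).Encodes (shade G s u W 1) (Function.update t u (t u - 1)) := by
  have hsub : (applyStep G st u W).A ⊆ st.A := by
    simp only [applyStep]
    split_ifs
    exacts [Finset.erase_subset _ _, subset_rfl]
  have hmem : ∀ v, v ∈ (applyStep G st u W).A ↔ Function.update t u (t u - 1) v ≠ 0 := by
    intro v
    simp only [applyStep, h.target_eq u hu, Function.update_apply]
    split_ifs <;> grind [h.mem_iff v]
  refine ⟨hmem, fun v hv => ?_, fun v hv => ?_⟩
  · simp only [applyStep, shade, hsub hv, true_and, h.shield_eq v (hsub hv)]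
  · have hv' := (hmem v).1 hv
    have hTv := h.target_eq v (hsub hv)
    simp only [applyStep, Function.update_apply] at hv' ⊢
    grind

theorem State.Encodes.legalStep {st : State V} (h : st.Encodes s t) (hu : t u ≠ 0)
    (hW : ∀ w ∈ W, t w ≠ 0 ∧ G.Adj u w) (hlt : ∑ w ∈ W, (s w + t w) < s u + t u)
    (hs : ∀ v, t v ≠ 0 → G.Adj u v → v ∉ W → 1 ≤ s v) : LegalStep G st u W := by
  have huA : u ∈ st.A := (h.mem_iff u).2 hu
  have hWA : ∀ w ∈ W, w ∈ st.A := fun w hw => (h.mem_iff w).2 (hW w hw).1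
  refine ⟨huA, fun w hw => ⟨hWA w hw, (hW w hw).2⟩, ?_, fun v hv => ?_⟩
  · rw [h.shield_eq u huA, h.target_eq u huA, Finset.sum_congr rfl fun w hw => by
      rw [h.shield_eq w (hWA w hw), h.target_eq w (hWA w hw)]]
    exact hlt
  · rw [h.shield_eq v hv]
    exact hs v ((h.mem_iff v).1 hv)

theorem Clearable.of_shadeSave (hcard : W.card ≤ 1) (hu : t u ≠ 0)
    (hW : ∀ w ∈ W, t w ≠ 0 ∧ G.Adj u w) (hlt : ∑ w ∈ W, (s w + t w) < s u + t u)
    (hs : ∀ v, t v ≠ 0 → G.Adj u v → v ∉ W → 1 ≤ s v)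
    (h : Clearable G (shade G s u W 1) (Function.update t u (t u - 1))) : Clearable G s t :=
  fun _ hst => .of_applyStep (hst.legalStep hu hW hlt hs) hcard
    (h _ (hst.step ((hst.mem_iff u).2 hu)))

theorem Clearable.of_shadeSave_repeat (k : ℕ) (hcard : W.card ≤ 1) (hu : k ≤ t u)
    (hW : ∀ w ∈ W, t w ≠ 0 ∧ G.Adj u w) (hle : ∑ w ∈ W, (s w + t w) + k ≤ s u + t u)
    (hs : ∀ v, t v ≠ 0 → G.Adj u v → v ∉ W → k ≤ s v)
    (h : Clearable G (shade G s u W k) (Function.update t u (t u - k))) : Clearable G s t := by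
  induction k generalizing s t with
  | zero =>
    rwa [shade_zero, Nat.sub_zero, Function.update_eq_self] at h
  | succ k ih =>
    have hne : ∀ w ∈ W, w ≠ u := fun w hw => (hW w hw).2.ne'
    have hsum : ∑ w ∈ W, (shade G s u W 1 w + Function.update t u (t u - 1) w) =
        ∑ w ∈ W, (s w + t w) :=
      Finset.sum_congr rfl fun w hw => by simp [shade, hw, hne w hw]
    refine .of_shadeSave hcard (by omega) hW (by omega)
      (fun v hv huv hvW => (Nat.le_add_left 1 k).trans (hs v hv huv hvW)) (ih ?_ ?_ ?_ ?_ ?_)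
    · simp only [Function.update_self]
      omega
    · exact fun w hw => by simpa [hne w hw] using hW w hw
    · have hsu : shade G s u W 1 u = s u := by simp [shade]
      rw [hsum, hsu, Function.update_self]
      omega
    · intro v hv huv hvW
      have hk := hs v (by simpa [huv.ne'] using hv) huv hvW
      simp only [shade, huv, hvW, not_false_eq_true, and_self, if_true]
      omega
    · rw [shade_shade, Function.update_self, Function.update_idem, Nat.sub_sub, Nat.add_comm 1 k]
      exact h

theorem Clearable.of_isIndepSet (hind : G.IsIndepSet (Function.support t)) : Clearable G s t := by
  suffices ∀ B : Finset V, Function.support t ⊆ B → Clearable G s t from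
    fun st hst => this st.A (fun v hv => (hst.mem_iff v).2 hv) st hst
  intro B hB
  induction B using Finset.induction_on generalizing s t with
  | empty =>
    intro st hst
    have hA : st.A = ∅ := Finset.eq_empty_of_forall_notMem fun v hv => by
      simpa using hB ((hst.mem_iff v).1 hv)
    exact ⟨[], trivial, by simp, hA⟩
  | insert u B _ ih =>
    have hsupp :
        Function.support (Function.update t u (t u - t u)) = Function.support t \ {u} := by
      rw [Nat.sub_self, Function.support_update_zero]
    refine .of_shadeSave_repeat (u := u) (W := ∅) (t u) (by simp) le_rfl (by simp) (by simp) ?_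
      (ih ?_ ?_)
    · intro v hv huv _
      by_cases htu : t u = 0
      · simp [htu]
      · exact absurd huv (hind htu hv huv.ne)
    · rw [hsupp]
      exact hind.mono Set.sdiff_subset
    · rw [hsupp, Set.sdiff_subset_iff]
      rwa [Finset.coe_insert, Set.insert_eq] at hB

theorem Clearable.of_save_one_of_two [DecidableEq V] {w x : V}
    (hN : ∀ v, G.Adj u v ↔ v = w ∨ v = x) (hwx : w ≠ x) (k : ℕ) (hw : t w ≠ 0) (hu : k ≤ t u)
    (hle : s w + t w + k ≤ s u + t u) (hx : k ≤ s x)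
    (h : Clearable G (Function.update s x (s x - k)) (Function.update t u (t u - k))) :
    Clearable G s t := by
  have hshade : shade G s u {w} k = Function.update s x (s x - k) := by
    funext v
    simp only [shade, hN, Finset.mem_singleton, Function.update_apply]
    grind
  refine .of_shadeSave_repeat (u := u) (W := {w}) k (by simp) hu ?_ (by simpa using hle) ?_
    (by rw [hshade]; convert h)
  · simp [hw, hN]
  · simp only [hN, Finset.mem_singleton]
    grind

end ShadeSave

/-- The shield of `P_{2m-1}` after `v_{2j}` has saved its left neighbor `a j` times and its right
neighbor `b j` times, the first and last vertex starting with `r + 1 - a 0` and `r + 1 - b m`.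
The vertex `v_{i+1}` is `i : Fin (2 * m - 1)`, so `v_{2j}` and `v_{2j+1}` have values `2 * j - 1`
and `2 * j`. -/
def pathShield (m r : ℕ) (a b : ℕ → ℕ) (v : Fin (2 * m - 1)) : ℕ :=
  if v.val % 2 = 0 then r + 1 - a (v.val / 2) - b (v.val / 2 + 1) else r + 1

/-- The target that accompanies `pathShield`. -/
def pathTarget (m r : ℕ) (a b : ℕ → ℕ) (v : Fin (2 * m - 1)) : ℕ :=
  if v.val % 2 = 0 then r else r - a (v.val / 2 + 1) - b (v.val / 2 + 1)

/-- `Clearable` for the state of `P_{2m-1}` that is described by the counts `a` and `b`. -/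
def PathClearable (m r : ℕ) (a b : ℕ → ℕ) : Prop :=
  Clearable (SimpleGraph.pathGraph (2 * m - 1)) (pathShield m r a b) (pathTarget m r a b)

theorem pathGraph_adj_iff_eq_or_eq {n : ℕ} {u w x : Fin n} (hw : w.val + 1 = u.val)
    (hx : x.val = u.val + 1) (v : Fin n) :
    (SimpleGraph.pathGraph n).Adj u v ↔ v = w ∨ v = x := by
  simp only [SimpleGraph.pathGraph_adj, Fin.ext_iff]
  omega

section Path

variable {m r : ℕ} {a b : ℕ → ℕ}

theorem pathShield_of_even {j : ℕ} {v : Fin (2 * m - 1)} (hv : v.val = 2 * j) :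
    pathShield m r a b v = r + 1 - a j - b (j + 1) := by
  grind [pathShield]

theorem pathShield_of_odd {j : ℕ} {v : Fin (2 * m - 1)} (hv : v.val = 2 * j + 1) :
    pathShield m r a b v = r + 1 := by
  grind [pathShield]

theorem pathTarget_of_even {j : ℕ} {v : Fin (2 * m - 1)} (hv : v.val = 2 * j) :
    pathTarget m r a b v = r := by
  grind [pathTarget]

theorem pathTarget_of_odd {j : ℕ} {v : Fin (2 * m - 1)} (hv : v.val = 2 * j + 1) :
    pathTarget m r a b v = r - a (j + 1) - b (j + 1) := by
  grind [pathTarget]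

theorem pathShield_update_left {j : ℕ} (k : ℕ) {x : Fin (2 * m - 1)} (hx : x.val = 2 * j) :
    pathShield m r (Function.update a j (a j + k)) b =
      Function.update (pathShield m r a b) x (pathShield m r a b x - k) := by
  funext v
  simp only [pathShield, Function.update_apply, Fin.ext_iff]
  grind

theorem pathShield_update_right {j : ℕ} (k : ℕ) {x : Fin (2 * m - 1)} (hx : x.val = 2 * j) :
    pathShield m r a (Function.update b (j + 1) (b (j + 1) + k)) =
      Function.update (pathShield m r a b) x (pathShield m r a b x - k) := by
  funext v
  simp only [pathShield, Function.update_apply, Fin.ext_iff]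
  grind

theorem pathTarget_update_left {j : ℕ} (k : ℕ) {u : Fin (2 * m - 1)} (hu : u.val = 2 * j + 1) :
    pathTarget m r (Function.update a (j + 1) (a (j + 1) + k)) b =
      Function.update (pathTarget m r a b) u (pathTarget m r a b u - k) := by
  funext v
  simp only [pathTarget, Function.update_apply, Fin.ext_iff]
  grind

theorem pathTarget_update_right {j : ℕ} (k : ℕ) {u : Fin (2 * m - 1)} (hu : u.val = 2 * j + 1) :
    pathTarget m r a (Function.update b (j + 1) (b (j + 1) + k)) =
      Function.update (pathTarget m r a b) u (pathTarget m r a b u - k) := by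
  funext v
  simp only [pathTarget, Function.update_apply, Fin.ext_iff]
  grind

theorem PathClearable.of_save_left (hr : r ≠ 0) {j : ℕ} (hj : j + 1 < m) (k : ℕ)
    (hsave : a (j + 1) + k ≤ a j) (htarget : a (j + 1) + b (j + 1) + k ≤ r)
    (hshield : a (j + 1) + b (j + 2) + k ≤ r + 1)
    (h : PathClearable m r (Function.update a (j + 1) (a (j + 1) + k)) b) :
    PathClearable m r a b := by
  obtain ⟨w, hw⟩ : ∃ w : Fin (2 * m - 1), w.val = 2 * j := ⟨⟨2 * j, by omega⟩, rfl⟩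
  obtain ⟨u, hu⟩ : ∃ u : Fin (2 * m - 1), u.val = 2 * j + 1 := ⟨⟨2 * j + 1, by omega⟩, rfl⟩
  obtain ⟨x, hx⟩ : ∃ x : Fin (2 * m - 1), x.val = 2 * (j + 1) := ⟨⟨2 * j + 2, by omega⟩, rfl⟩
  have hN := pathGraph_adj_iff_eq_or_eq (u := u) (w := w) (x := x) (by omega) (by omega)
  have hwx : w ≠ x := Fin.ne_of_val_ne (by omega)
  refine .of_save_one_of_two hN hwx k ?_ ?_ ?_ ?_
    (by rwa [← pathShield_update_left k hx, ← pathTarget_update_left k hu])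
  all_goals
    simp only [pathShield_of_even hw, pathTarget_of_even hw, pathShield_of_odd hu,
      pathTarget_of_odd hu, pathShield_of_even hx]
    grind

theorem PathClearable.of_save_right (hr : r ≠ 0) {j : ℕ} (hj : j + 1 < m) (k : ℕ)
    (hsave : b (j + 1) + k ≤ b (j + 2)) (htarget : a (j + 1) + b (j + 1) + k ≤ r)
    (hshield : a j + b (j + 1) + k ≤ r + 1)
    (h : PathClearable m r a (Function.update b (j + 1) (b (j + 1) + k))) :
    PathClearable m r a b := by
  obtain ⟨x, hx⟩ : ∃ x : Fin (2 * m - 1), x.val = 2 * j := ⟨⟨2 * j, by omega⟩, rfl⟩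
  obtain ⟨u, hu⟩ : ∃ u : Fin (2 * m - 1), u.val = 2 * j + 1 := ⟨⟨2 * j + 1, by omega⟩, rfl⟩
  obtain ⟨w, hw⟩ : ∃ w : Fin (2 * m - 1), w.val = 2 * (j + 1) := ⟨⟨2 * j + 2, by omega⟩, rfl⟩
  have hN := pathGraph_adj_iff_eq_or_eq (u := u) (w := x) (x := w) (by omega) (by omega)
  have hwx : w ≠ x := Fin.ne_of_val_ne (by omega)
  refine .of_save_one_of_two (fun v => (hN v).trans or_comm) hwx k ?_ ?_ ?_ ?_
    (by rwa [← pathShield_update_right k hx, ← pathTarget_update_right k hu])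
  all_goals
    simp only [pathShield_of_even hw, pathTarget_of_even hw, pathShield_of_odd hu,
      pathTarget_of_odd hu, pathShield_of_even hx]
    grind

/-- The values of `a` when the sweep from left to right has just passed `v_{2n}`. -/
def leftCount (r n j : ℕ) : ℕ := if j ≤ n then r - j else 0

/-- The values of `b` when the sweep from right to left is about to reach `v_{2n}`. -/
def rightCount (r n j : ℕ) : ℕ := if n < j then min j r else 0

theorem PathClearable.of_left_sweep (hr : r ≠ 0) (hb : ∀ j ≤ m, b j ≤ min j r) {n : ℕ}
    (hn : n < m) (h : PathClearable m r (leftCount r n) b) :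
    PathClearable m r (leftCount r 0) b := by
  induction n with
  | zero => exact h
  | succ n ih =>
    have hupdate : Function.update (leftCount r n) (n + 1)
        (leftCount r n (n + 1) + (r - (n + 1))) = leftCount r (n + 1) := by
      funext j
      grind [leftCount]
    have hb₁ := hb (n + 1) (by omega)
    have hb₂ := hb (n + 2) (by omega)
    refine ih (by omega) (.of_save_left hr hn (r - (n + 1)) ?_ ?_ ?_ (by rwa [hupdate]))
    all_goals
      simp only [leftCount]
      grind

theorem PathClearable.of_right_sweep (hr : r ≠ 0) (ha : ∀ j < m, a j ≤ r - j) {n : ℕ}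
    (hn : n < m) (h : PathClearable m r a (rightCount r 0)) :
    PathClearable m r a (rightCount r n) := by
  induction n with
  | zero => exact h
  | succ n ih =>
    have hupdate : Function.update (rightCount r (n + 1)) (n + 1)
        (rightCount r (n + 1) (n + 1) + min (n + 1) r) = rightCount r n := by
      funext j
      grind [rightCount]
    have ha₀ := ha n (by omega)
    have ha₁ := ha (n + 1) hn
    refine .of_save_right hr hn (min (n + 1) r) ?_ ?_ ?_ (by rw [hupdate]; exact ih (by omega))
    all_goals
      simp only [rightCount]
      grind

theorem PathClearable.of_add_eq (h : ∀ j, j + 1 < m → a (j + 1) + b (j + 1) = r) :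
    PathClearable m r a b := by
  have heven : ∀ v, pathTarget m r a b v ≠ 0 → v.val % 2 = 0 := by
    intro v hv
    have := h (v.val / 2)
    grind [pathTarget]
  refine .of_isIndepSet fun x hx y hy _ hxy => ?_
  have hx_even := heven x hx
  have hy_even := heven y hy
  rw [SimpleGraph.pathGraph_adj] at hxy
  omega

theorem pathShield_initial (hm : 2 ≤ m) (hrm : r ≤ m) :
    pathShield m r (leftCount r 0) (rightCount r (m - 1)) =
      fun v => if v.val = 0 ∨ v.val = 2 * m - 2 then 1 else r + 1 := by
  funext v
  simp only [pathShield, leftCount, rightCount]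
  grind

theorem pathTarget_initial :
    pathTarget m r (leftCount r 0) (rightCount r (m - 1)) = fun _ => r := by
  funext v
  simp only [pathTarget, leftCount, rightCount]
  grind

theorem pathClearable_initial (hr : r ≠ 0) (hm : 0 < m) :
    PathClearable m r (leftCount r 0) (rightCount r (m - 1)) := by
  have hlast : m - 1 < m := by omega
  refine .of_left_sweep hr ?_ hlast (.of_right_sweep hr ?_ hlast (.of_add_eq ?_))
  all_goals
    simp only [leftCount, rightCount]
    grind

end Path

theorem st4Deg_path_odd_general (m r : ℕ) (hr : 1 ≤ r) (hrm : r ≤ m) :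
    ST4Deg (SimpleGraph.pathGraph (2 * m - 1))
      (fun v => if v.val = 0 ∨ v.val = 2 * m - 2 then 1 else r + 1)
      (fun _ => r) := by
  have hr₀ : r ≠ 0 := by omega
  refine Clearable.st4Deg ?_ fun _ => hr₀
  rcases (hr.trans hrm).eq_or_lt with rfl | hm
  · -- the two ends of the path coincide, so `pathShield` would lower the shield twice
    exact .of_isIndepSet fun x _ y _ hxy _ => hxy (Subsingleton.elim (α := Fin 1) x y)
  · rw [← pathShield_initial hm hrm, ← pathTarget_initial]
    exact pathClearable_initial hr₀ (by omega)

/-- For `r ∈ ℕ` (so `r ≥ 1`), let `G = P_{2r−1}` be the path whose vertices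
in order are `v_1, …, v_{2r−1}`.  Let `S` be the shield of `G` with `S(v_1) = S(v_{2r−1}) = 1`
and `S(v_i) = r+1` for `2 ≤ i ≤ 2r−2`, and let `T` be the target that is identically `r`.
Then `G` is `ST⁽⁴⁾`-`(S,T)`-degenerate. -/
theorem st4Deg_path_odd (r : ℕ) (hr : 1 ≤ r) :
    ST4Deg (SimpleGraph.pathGraph (2 * r - 1))
      (fun v => if v.val = 0 ∨ v.val = 2 * r - 2 then 1 else r + 1)
      (fun _ => r) :=
  st4Deg_path_odd_general r r hr le_rfl

end StrictDeg
end
end
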